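/- Let f ∈ Γ₀(H), let x ∈ H, and define Φ: [0,+∞) → (−∞,+∞] by Φ(γ) = f(prox_{γ⊙f} x). Let μ ∈ [0,+∞) and γ ∈ (μ,+∞). Then, in the extended reals, Φ(γ) ≤ Φ(μ) − ‖prox_{μ⊙f} x − prox_{γf} x‖²/(γ − μ). -/

import Mathlib

open scoped Classical

noncomputable section

/-- Effective domain of an extended-real-valued function. -/
def edom {E : Type*} (f : E → EReal) : Set E := {x | f x < ⊤}

/-- Convexity of an extended-real-valued function, via its epigraph. -/
def ConvexEpi {E : Type*} [AddCommGroup E] [Module ℝ E] (f : E → EReal) : Prop :=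
  Convex ℝ {p : E × ℝ | f p.1 ≤ (p.2 : EReal)}

/-- `f ∈ Γ₀(E)`: proper, lower semicontinuous, convex, with values in `(-∞, +∞]`. -/
def IsGamma0 {E : Type*} [AddCommGroup E] [Module ℝ E] [TopologicalSpace E]
    (f : E → EReal) : Prop :=
  (∃ x, f x ≠ ⊤) ∧ (∀ x, f x ≠ ⊥) ∧ LowerSemicontinuous f ∧ ConvexEpi f

/-- Proximity operator: the (unique, for `f ∈ Γ₀`) minimizer of
`y ↦ f y + ‖x - y‖² / 2`. -/
def prox {E : Type*} [NormedAddCommGroup E] [InnerProductSpace ℝ E]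
    (f : E → EReal) (x : E) : E :=
  Classical.epsilon fun p =>
    ∀ y, f p + ((‖x - p‖ ^ 2 / 2 : ℝ) : EReal) ≤ f y + ((‖x - y‖ ^ 2 / 2 : ℝ) : EReal)

/-- Metric projection onto a set. -/
def projC {E : Type*} [NormedAddCommGroup E] (C : Set E) (x : E) : E :=
  Classical.epsilon fun p => p ∈ C ∧ ∀ y ∈ C, ‖x - p‖ ≤ ‖x - y‖

/-- Fenchel conjugate. -/
def fconj {E : Type*} [NormedAddCommGroup E] [InnerProductSpace ℝ E]
    (f : E → EReal) (y : E) : EReal :=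
  ⨆ x, ((inner ℝ x y : ℝ) : EReal) - f x

/-- Plain scalar multiple `ξ·f`. -/
def smulE {E : Type*} (ξ : ℝ) (f : E → EReal) : E → EReal := fun x => (ξ : EReal) * f x

/-- The operation `ξ ⊙ f`: indicator of `cl (dom f)` if `ξ = 0`, and `ξ·f` if `ξ > 0`. -/
def rscale {E : Type*} [TopologicalSpace E] (ξ : ℝ) (f : E → EReal) : E → EReal :=
  if ξ = 0 then fun x => if x ∈ closure (edom f) then (0 : EReal) else ⊤
  else fun x => (ξ : EReal) * f x

/-- `f^∨`: agrees with `f` where `-∞ < f < 0`, and is `+∞` elsewhere. -/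
def pbas {E : Type*} (f : E → EReal) : E → EReal :=
  fun x => if ⊥ < f x ∧ f x < 0 then f x else ⊤

/-- `f^∧`: agrees with `f` where `0 < f < +∞`, and is `+∞` elsewhere. -/
def phaut {E : Type*} (f : E → EReal) : E → EReal :=
  fun x => if 0 < f x ∧ f x < ⊤ then f x else ⊤

/-- `f_▽ = (f^∨)**`. -/
def basEnv {E : Type*} [NormedAddCommGroup E] [InnerProductSpace ℝ E]
    (f : E → EReal) : E → EReal :=
  fconj (fconj (pbas f))

/-- `f_▲ = (f^∧)**`. -/
def hautEnv {E : Type*} [NormedAddCommGroup E] [InnerProductSpace ℝ E]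
    (f : E → EReal) : E → EReal :=
  fconj (fconj (phaut f))

/-- `S = s⁻¹((0, +∞))`. -/
def sdom {G : Type*} (s : G → EReal) : Set G := {v | 0 < s v ∧ s v < ⊤}

/-- The preperspective `φ ⋉ s`, on the Hilbert direct sum `H ⊕ G`. -/
def prePersp {H G : Type*} [NormedAddCommGroup H] [InnerProductSpace ℝ H]
    [NormedAddCommGroup G] [InnerProductSpace ℝ G]
    (φ : H → EReal) (s : G → EReal) : WithLp 2 (H × G) → EReal := fun q =>
  if 0 < s ((WithLp.equiv 2 (H × G)) q).2 ∧ s ((WithLp.equiv 2 (H × G)) q).2 < ⊤ then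
    s ((WithLp.equiv 2 (H × G)) q).2 *
      φ ((s ((WithLp.equiv 2 (H × G)) q).2).toReal⁻¹ • ((WithLp.equiv 2 (H × G)) q).1)
  else ⊤

/-- The perspective `φ ▷ s`: the largest lower semicontinuous convex minorant of the
preperspective `φ ⋉ s`, on the Hilbert direct sum `H ⊕ G`. -/
def persp {H G : Type*} [NormedAddCommGroup H] [InnerProductSpace ℝ H]
    [NormedAddCommGroup G] [InnerProductSpace ℝ G]
    (φ : H → EReal) (s : G → EReal) : WithLp 2 (H × G) → EReal := fun q =>
  sSup {t : EReal | ∃ g : WithLp 2 (H × G) → EReal,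
    LowerSemicontinuous g ∧ ConvexEpi g ∧ (∀ r, g r ≤ prePersp φ s r) ∧ t = g q}

/-- The point `(x, y)` in the Hilbert direct sum `H ⊕ G`. -/
def pairHG {H G : Type*} (x : H) (y : G) : WithLp 2 (H × G) :=
  (WithLp.equiv 2 (H × G)).symm (x, y)

end

/-!
Since `ξ ⊙ f ∈ Γ₀(H)` for every `ξ ≥ 0`, both `p = prox_{γf} x` and `q = prox_{μ⊙f} x` are genuine
minimizers, and on `dom f` both `γf` and `μ⊙f` are real multiples of `f`, even for `μ = 0`. The
first-order optimality condition at `p`, tested at `q`, and the one at `q`, tested at `p`, add up to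
`‖q - p‖² ≤ (γ - μ) (f q - f p)`.

Minimizers exist because an affine minorant of a function in `Γ₀(H)` bounds the proximal objective
from below, while Apollonius' identity makes the diameters of its sublevel sets shrink to zero, so
that Cantor's intersection theorem yields a point where the infimum is attained.
-/

open Filter Topology

section Minimizers

lemma exists_forall_le_of_tendsto_diam_sublevel {X α : Type*} [PseudoMetricSpace X]
    [CompleteSpace X] [LinearOrder α] {F : X → α} (hF : LowerSemicontinuous F) {r : ℕ → α}
    (hr : Antitone r) (hne : ∀ n, ∃ y, F y ≤ r n)
    (hbdd : ∀ n, Bornology.IsBounded {y | F y ≤ r n})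
    (hdiam : Tendsto (fun n => Metric.diam {y | F y ≤ r n}) atTop (𝓝 0)) :
    ∃ p, ∀ n, F p ≤ r n := by
  have hfin : ∀ N, (⋂ n ≤ N, {y | F y ≤ r n}).Nonempty := fun N => by
    obtain ⟨y, hy⟩ := hne N
    exact ⟨y, Set.mem_iInter₂.2 fun n hn => hy.trans (hr hn)⟩
  obtain ⟨p, hp⟩ := Metric.nonempty_iInter_of_nonempty_biInter
    (fun n => hF.isClosed_preimage (r n)) hbdd hfin hdiam
  exact ⟨p, Set.mem_iInter.1 hp⟩

lemma exists_forall_le_of_dist_sq_le {X : Type*} [PseudoMetricSpace X] [CompleteSpace X]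
    {F : X → EReal} (hF : LowerSemicontinuous F) {m C : ℝ} (hm : IsGLB (Set.range F) m)
    (hdist : ∀ (r : ℝ) (a b : X), F a ≤ r → F b ≤ r → dist a b ^ 2 ≤ C * (r - m)) :
    ∃ p, ∀ y, F p ≤ F y := by
  set ε : ℕ → ℝ := fun n => 1 / ((n : ℝ) + 1)
  have hε : Tendsto ε atTop (𝓝 0) := tendsto_one_div_add_atTop_nhds_zero_nat
  have hε_pos : ∀ n, 0 < ε n := fun n => Nat.one_div_pos_of_nat
  set S : ℕ → Set X := fun n => {y | F y ≤ ((m + ε n : ℝ) : EReal)}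
  have hS_nonempty : ∀ n, ∃ y, y ∈ S n := fun n => by
    have hlt : (m : EReal) < ((m + ε n : ℝ) : EReal) :=
      EReal.coe_lt_coe_iff.2 (lt_add_of_pos_right m (hε_pos n))
    obtain ⟨_, ⟨y, rfl⟩, -, hy⟩ := hm.exists_between hlt
    exact ⟨y, hy.le⟩
  have hS_dist : ∀ n, ∀ a ∈ S n, ∀ b ∈ S n, dist a b ≤ √(C * ε n) := fun n a ha b hb =>
    Real.le_sqrt_of_sq_le ((hdist _ a b ha hb).trans_eq (by ring))
  have hsqrt : Tendsto (fun n => √(C * ε n)) atTop (𝓝 0) := by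
    simpa using (hε.const_mul C).sqrt
  have hS_diam : Tendsto (fun n => Metric.diam (S n)) atTop (𝓝 0) :=
    squeeze_zero (fun n => Metric.diam_nonneg)
      (fun n => Metric.diam_le_of_forall_dist_le (Real.sqrt_nonneg _) (hS_dist n)) hsqrt
  obtain ⟨p, hp⟩ := exists_forall_le_of_tendsto_diam_sublevel hF
    (fun n k hnk => EReal.coe_le_coe_iff.2 (by gcongr; exact Nat.one_div_le_one_div hnk))
    hS_nonempty (fun n => Metric.isBounded_iff.2 ⟨_, fun a ha b hb => hS_dist n a ha b hb⟩) hS_diam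
  have hlim : Tendsto (fun n => ((m + ε n : ℝ) : EReal)) atTop (𝓝 m) :=
    (continuous_coe_real_ereal.tendsto' _ _ (by simp)).comp (hε.const_add m)
  exact ⟨p, fun y => (ge_of_tendsto' hlim hp).trans (hm.1 ⟨y, rfl⟩)⟩

end Minimizers

section ConvexEpi

variable {E : Type*} [AddCommGroup E] [Module ℝ E]

lemma ConvexEpi.convex_edom {f : E → EReal} (hf : ConvexEpi f) : Convex ℝ (edom f) := by
  have himage : edom f = LinearMap.fst ℝ E ℝ '' {p : E × ℝ | f p.1 ≤ (p.2 : EReal)} := by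
    ext y
    refine ⟨fun hy => ⟨(y, (f y).toReal), EReal.le_coe_toReal hy.ne, rfl⟩, ?_⟩
    rintro ⟨p, hp, rfl⟩
    exact lt_of_le_of_lt hp (EReal.coe_lt_top _)
  rw [himage]
  exact hf.linear_image _

lemma convexEpi_smulE {f : E → EReal} (hf : ConvexEpi f) {ξ : ℝ} (hξ : 0 < ξ) :
    ConvexEpi (smulE ξ f) := by
  have hpre : {p : E × ℝ | smulE ξ f p.1 ≤ (p.2 : EReal)} =
      ((LinearMap.id (R := ℝ) (M := E)).prodMap (ξ⁻¹ • LinearMap.id)) ⁻¹'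
        {p : E × ℝ | f p.1 ≤ (p.2 : EReal)} := by
    ext p
    have := EReal.le_div_iff_mul_le (a := f p.1) (c := (p.2 : EReal))
      (EReal.coe_pos.2 hξ) (EReal.coe_ne_top ξ)
    rw [← EReal.coe_div, mul_comm] at this
    simpa [smulE, div_eq_inv_mul] using this.symm
  rw [ConvexEpi, hpre]
  exact Convex.linear_preimage hf _

end ConvexEpi

section RScale

variable {E : Type*} [TopologicalSpace E]

lemma rscale_apply_of_ne_top {f : E → EReal} {y : E} (hy : f y ≠ ⊤) (ξ : ℝ) :
    rscale ξ f y = ξ * f y := by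
  obtain rfl | hξ := eq_or_ne ξ 0
  · have hcl : y ∈ closure (edom f) := subset_closure (lt_top_iff_ne_top.2 hy)
    simp [rscale, hcl]
  · simp [rscale, hξ]

lemma rscale_eq_smulE {ξ : ℝ} (hξ : ξ ≠ 0) (f : E → EReal) : rscale ξ f = smulE ξ f :=
  if_neg hξ

lemma rscale_ne_top {f : E → EReal} {y : E} (hy : f y ≠ ⊤) {ξ : ℝ} (hξ : 0 ≤ ξ) :
    rscale ξ f y ≠ ⊤ := by
  rw [rscale_apply_of_ne_top hy, EReal.mul_ne_top]
  exact ⟨.inl (EReal.coe_ne_bot ξ), .inl (EReal.coe_nonneg.2 hξ), .inl (EReal.coe_ne_top ξ),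
    .inr hy⟩

lemma rscale_ne_bot {f : E → EReal} {y : E} (hy : f y ≠ ⊥) {ξ : ℝ} (hξ : 0 ≤ ξ) :
    rscale ξ f y ≠ ⊥ := by
  unfold rscale
  split_ifs
  · dsimp only
    split_ifs <;> simp
  · rw [EReal.mul_ne_bot]
    exact ⟨.inl (EReal.coe_ne_bot ξ), .inr hy, .inl (EReal.coe_ne_top ξ),
      .inl (EReal.coe_nonneg.2 hξ)⟩

lemma ne_top_of_rscale_ne_top {f : E → EReal} {y : E} {ξ : ℝ} (hξ : 0 < ξ)
    (hy : rscale ξ f y ≠ ⊤) : f y ≠ ⊤ := fun htop => by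
  simp [rscale, hξ.ne', htop, EReal.coe_mul_top_of_pos hξ] at hy

lemma lowerSemicontinuous_rscale {f : E → EReal} (hf : LowerSemicontinuous f) {ξ : ℝ}
    (hξ : 0 ≤ ξ) : LowerSemicontinuous (rscale ξ f) := by
  obtain rfl | hξ := hξ.eq_or_lt
  · have hind : rscale 0 f = (closure (edom f))ᶜ.indicator fun _ => ⊤ := by
      ext y
      simp [rscale, Set.indicator_apply, ite_not]
    rw [hind]
    exact isClosed_closure.isOpen_compl.lowerSemicontinuous_indicator le_top
  · have hcont : Continuous fun t : EReal => (ξ : EReal) * t := continuous_iff_continuousAt.2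
      fun t => EReal.Tendsto.const_mul tendsto_id (by simp) (by simp)
    rw [rscale_eq_smulE hξ.ne']
    exact hcont.comp_lowerSemicontinuous hf fun s t hst =>
      mul_le_mul_of_nonneg_left hst (EReal.coe_nonneg.2 hξ.le)

variable [AddCommGroup E] [Module ℝ E] [IsTopologicalAddGroup E] [ContinuousSMul ℝ E]

lemma convexEpi_rscale {f : E → EReal} (hf : ConvexEpi f) {ξ : ℝ} (hξ : 0 ≤ ξ) :
    ConvexEpi (rscale ξ f) := by
  obtain rfl | hξ := hξ.eq_or_lt
  · have hepi : {p : E × ℝ | rscale 0 f p.1 ≤ (p.2 : EReal)} =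
        closure (edom f) ×ˢ Set.Ici 0 := by
      ext p
      by_cases hp : p.1 ∈ closure (edom f) <;> simp [rscale, hp]
    rw [ConvexEpi, hepi]
    exact hf.convex_edom.closure.prod (convex_Ici 0)
  · rw [rscale_eq_smulE hξ.ne']
    exact convexEpi_smulE hf hξ

lemma isGamma0_rscale {f : E → EReal} (hf : IsGamma0 f) {ξ : ℝ} (hξ : 0 ≤ ξ) :
    IsGamma0 (rscale ξ f) := by
  obtain ⟨⟨x₀, hx₀⟩, hbot, hlsc, hconv⟩ := hf
  exact ⟨⟨x₀, rscale_ne_top hx₀ hξ⟩, fun y => rscale_ne_bot (hbot y) hξ,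
    lowerSemicontinuous_rscale hlsc hξ, convexEpi_rscale hconv hξ⟩

end RScale

lemma IsGamma0.exists_affine_le {E : Type*} [AddCommGroup E] [Module ℝ E] [TopologicalSpace E]
    [IsTopologicalAddGroup E] [ContinuousSMul ℝ E] [LocallyConvexSpace ℝ E]
    {f : E → EReal} (hf : IsGamma0 f) :
    ∃ (l : E →L[ℝ] ℝ) (c : ℝ), ∀ y, ((l y + c : ℝ) : EReal) ≤ f y := by
  obtain ⟨⟨x₀, hx₀⟩, hbot, hlsc, hconv⟩ := hf
  obtain ⟨a, ha⟩ : ∃ a : ℝ, f x₀ = a := ⟨_, (EReal.coe_toReal hx₀ (hbot x₀)).symm⟩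
  have hclosed : IsClosed {p : E × ℝ | f p.1 ≤ (p.2 : EReal)} :=
    hlsc.isClosed_epigraph.preimage (continuous_id.prodMap continuous_coe_real_ereal)
  have hbelow : (x₀, a - 1) ∉ {p : E × ℝ | f p.1 ≤ (p.2 : EReal)} := by
    rw [Set.mem_ofPred_eq, ha, EReal.coe_le_coe_iff]
    linarith
  obtain ⟨L, b, hLb, hbL⟩ := geometric_hahn_banach_point_closed hconv hclosed hbelow
  set s : ℝ := L (0, 1)
  have hL : ∀ (y : E) (t : ℝ), L (y, t) = L (y, 0) + t * s := fun y t => by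
    rw [← smul_eq_mul, ← map_smul, ← map_add]
    simp
  have hs : 0 < s := by
    have := hbL (x₀, a) ha.le
    rw [hL] at hLb this
    linarith
  refine ⟨-s⁻¹ • L.comp (.inl ℝ E ℝ), s⁻¹ * b, fun y => ?_⟩
  refine EReal.le_of_forall_lt_iff_le.1 fun t ht => EReal.coe_le_coe_iff.2 ?_
  have hbt : b < L (y, 0) + t * s := hL y t ▸ hbL (y, t) ht.le
  calc (-s⁻¹ • L.comp (.inl ℝ E ℝ)) y + s⁻¹ * b = (b - L (y, 0)) / s := by
        simp only [smul_apply, ContinuousLinearMap.comp_apply,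
          ContinuousLinearMap.inl_apply, smul_eq_mul]
        ring
    _ ≤ t := by rw [div_le_iff₀ hs]; linarith

section Prox

variable {E : Type*} [NormedAddCommGroup E] {f g : E → EReal} {x p q y : E}

/-- The function `y ↦ f y + ‖x - y‖² / 2` which `prox f x` is meant to minimize. -/
noncomputable def proxObjective (f : E → EReal) (x y : E) : EReal :=
  f y + ((‖x - y‖ ^ 2 / 2 : ℝ) : EReal)

/-- `p` is a proximal point of `x` for `f`. Unlike `prox f x`, which has a junk value when there is
no minimizer, this makes sense without `f ∈ Γ₀(E)` or completeness. -/
def IsProx (f : E → EReal) (x p : E) : Prop :=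
  ∀ y, proxObjective f x p ≤ proxObjective f x y

lemma proxObjective_le_coe {r : ℝ} :
    proxObjective f x y ≤ r ↔ f y ≤ ((r - ‖x - y‖ ^ 2 / 2 : ℝ) : EReal) := by
  rw [EReal.coe_sub, EReal.le_sub_iff_add_le (.inl (EReal.coe_ne_bot _))
    (.inl (EReal.coe_ne_top _)), proxObjective]

lemma lowerSemicontinuous_proxObjective (hf : LowerSemicontinuous f) (x : E) :
    LowerSemicontinuous (proxObjective f x) := by
  have hsq : Continuous fun y => ((‖x - y‖ ^ 2 / 2 : ℝ) : EReal) :=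
    continuous_coe_real_ereal.comp (by fun_prop)
  exact hf.add' hsq.lowerSemicontinuous fun y => EReal.continuousAt_add
    (.inr (EReal.coe_ne_bot _)) (.inr (EReal.coe_ne_top _))

lemma IsProx.ne_top (hp : IsProx f x p) (hy : f y ≠ ⊤) : f p ≠ ⊤ := fun htop => by
  have hle := hp y
  rw [proxObjective, htop, EReal.top_add_coe, top_le_iff] at hle
  exact (EReal.add_lt_top hy (EReal.coe_ne_top _)).ne hle

lemma IsGamma0.exists_forall_coe_le_proxObjective [NormedSpace ℝ E] (hf : IsGamma0 f)
    (x : E) : ∃ m : ℝ, ∀ y, (m : EReal) ≤ proxObjective f x y := by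
  obtain ⟨l, c, hlc⟩ := hf.exists_affine_le
  refine ⟨l x + c - ‖l‖ ^ 2 / 2, fun y => ?_⟩
  have hl : l x - l y ≤ ‖l‖ * ‖x - y‖ := by
    rw [← map_sub]
    exact (le_abs_self _).trans (l.le_opNorm _)
  calc ((l x + c - ‖l‖ ^ 2 / 2 : ℝ) : EReal)
      ≤ ((l y + c + ‖x - y‖ ^ 2 / 2 : ℝ) : EReal) :=
        EReal.coe_le_coe_iff.2 (by nlinarith only [hl, sq_nonneg (‖l‖ - ‖x - y‖)])
    _ ≤ proxObjective f x y := by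
        rw [EReal.coe_add]
        exact add_le_add_left (hlc y) _

variable [InnerProductSpace ℝ E]

lemma ConvexEpi.proxObjective_midpoint_le (hf : ConvexEpi f) {a b : E} {r : ℝ}
    (ha : proxObjective f x a ≤ r) (hb : proxObjective f x b ≤ r) :
    proxObjective f x (midpoint ℝ a b) ≤ ((r - dist a b ^ 2 / 8 : ℝ) : EReal) := by
  rw [proxObjective_le_coe] at *
  have hmid : f (midpoint ℝ a b) ≤
      ((2⁻¹ * (r - ‖x - a‖ ^ 2 / 2) + 2⁻¹ * (r - ‖x - b‖ ^ 2 / 2) : ℝ) : EReal) := by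
    rw [midpoint_eq_smul_add, invOf_eq_inv, smul_add]
    exact hf (x := (a, _)) (y := (b, _)) ha hb (by norm_num) (by norm_num) (by norm_num)
  have hapollonius :=
    EuclideanGeometry.dist_sq_add_dist_sq_eq_two_mul_dist_midpoint_sq_add_half_dist_sq x a b
  simp only [dist_eq_norm] at hapollonius ⊢
  exact hmid.trans_eq (congrArg _ (by linarith))

lemma IsGamma0.exists_isProx [CompleteSpace E] (hf : IsGamma0 f) (x : E) :
    ∃ p, IsProx f x p := by
  obtain ⟨m₀, hm₀⟩ := hf.exists_forall_coe_le_proxObjective x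
  obtain ⟨⟨x₀, hx₀⟩, -, hlsc, hconv⟩ := hf
  have hbot : ⨅ y, proxObjective f x y ≠ ⊥ :=
    ((EReal.bot_lt_coe m₀).trans_le (le_iInf hm₀)).ne'
  have htop : ⨅ y, proxObjective f x y ≠ ⊤ :=
    ((iInf_le _ x₀).trans_lt (EReal.add_lt_top hx₀ (EReal.coe_ne_top _))).ne
  have hglb := isGLB_iInf (f := proxObjective f x)
  lift ⨅ y, proxObjective f x y to ℝ using ⟨htop, hbot⟩ with m
  refine exists_forall_le_of_dist_sq_le (lowerSemicontinuous_proxObjective hlsc x) (C := 8) hglb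
    fun r a b ha hb => ?_
  have hle : m ≤ r - dist a b ^ 2 / 8 := EReal.coe_le_coe_iff.1 <|
    (hglb.1 ⟨_, rfl⟩).trans (hconv.proxObjective_midpoint_le ha hb)
  linarith

lemma IsGamma0.isProx_prox [CompleteSpace E] (hf : IsGamma0 f) (x : E) :
    IsProx f x (prox f x) :=
  Classical.epsilon_spec (hf.exists_isProx x)

-- First-order optimality, from comparing `p` with `p + t • (y - p)` and letting `t → 0⁺`.
lemma IsProx.add_inner_le (hp : IsProx f x p) (hf : ConvexEpi f) {a b : ℝ} (ha : f p = a)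
    (hb : f y ≤ b) : a + inner ℝ (x - p) (y - p) ≤ b := by
  have hseg : ∀ t ∈ Set.Ioc (0 : ℝ) 1,
      a + inner ℝ (x - p) (y - p) - b ≤ t * (‖y - p‖ ^ 2 / 2) := by
    rintro t ⟨ht, ht1⟩
    set z : E := (1 - t) • p + t • y
    have hfz : f z ≤ (((1 - t) * a + t * b : ℝ) : EReal) :=
      hf (x := (p, a)) (y := (y, b)) ha.le hb (sub_nonneg.2 ht1) ht.le (sub_add_cancel 1 t)
    have hmin : a + ‖x - p‖ ^ 2 / 2 ≤ (1 - t) * a + t * b + ‖x - z‖ ^ 2 / 2 := by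
      have := (hp z).trans (add_le_add_left hfz _)
      rw [proxObjective, ha] at this
      exact_mod_cast this
    have hxz : ‖x - z‖ ^ 2 =
        ‖x - p‖ ^ 2 - 2 * (t * inner ℝ (x - p) (y - p)) + t ^ 2 * ‖y - p‖ ^ 2 := by
      rw [show x - z = (x - p) - t • (y - p) by module, norm_sub_sq_real, inner_smul_right,
        norm_smul, mul_pow, Real.norm_eq_abs, sq_abs]
    refine le_of_mul_le_mul_left ?_ ht
    linarith
  have hlim : Tendsto (fun t : ℝ => t * (‖y - p‖ ^ 2 / 2)) (𝓝[>] 0) (𝓝 0) :=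
    ((continuous_mul_const _).tendsto' 0 0 (zero_mul _)).mono_left nhdsWithin_le_nhds
  have := ge_of_tendsto hlim (eventually_of_mem (Ioc_mem_nhdsGT one_pos) hseg)
  linarith

lemma IsProx.norm_sub_sq_le (hp : IsProx f x p) (hq : IsProx g x q) (hf : ConvexEpi f)
    (hg : ConvexEpi g) {fp fq gp gq : ℝ} (hfp : f p = fp) (hfq : f q = fq) (hgp : g p = gp)
    (hgq : g q = gq) : ‖q - p‖ ^ 2 ≤ (fq - fp) - (gq - gp) := by
  have hpq := hp.add_inner_le hf hfp hfq.le
  have hqp := hq.add_inner_le hg hgq hgp.le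
  have hinner : inner ℝ (x - p) (q - p) + inner ℝ (x - q) (p - q) = ‖q - p‖ ^ 2 := by
    rw [← neg_sub q p, inner_neg_right, ← sub_eq_add_neg, ← inner_sub_left,
      sub_sub_sub_cancel_left, real_inner_self_eq_norm_sq]
  linarith

end Prox

/-- Lemma 3.3(i). -/
theorem stmt4 {H : Type*} [NormedAddCommGroup H] [InnerProductSpace ℝ H] [CompleteSpace H]
    (f : H → EReal) (hf : IsGamma0 f) (x : H) (μ γ : ℝ) (hμ : 0 ≤ μ) (hγ : μ < γ) :
    f (prox (rscale γ f) x) ≤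
      f (prox (rscale μ f) x) -
        ((‖prox (rscale μ f) x - prox (smulE γ f) x‖ ^ 2 / (γ - μ) : ℝ) : EReal) := by
  have hγ0 : 0 < γ := hμ.trans_lt hγ
  rw [← rscale_eq_smulE hγ0.ne']
  have hp := (isGamma0_rscale hf hγ0.le).isProx_prox x
  have hq := (isGamma0_rscale hf hμ).isProx_prox x
  generalize prox (rscale γ f) x = p at *
  generalize prox (rscale μ f) x = q at *
  by_cases hfq : f q = ⊤
  · rw [hfq, EReal.top_sub_coe]
    exact le_top
  have hfp : f p ≠ ⊤ := ne_top_of_rscale_ne_top hγ0 (hp.ne_top (rscale_ne_top hfq hγ0.le))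
  obtain ⟨a, ha⟩ : ∃ a : ℝ, f p = a := ⟨_, (EReal.coe_toReal hfp (hf.2.1 p)).symm⟩
  obtain ⟨b, hb⟩ : ∃ b : ℝ, f q = b := ⟨_, (EReal.coe_toReal hfq (hf.2.1 q)).symm⟩
  have hval : ∀ {ξ y} {c : ℝ}, f y = c → rscale ξ f y = ((ξ * c : ℝ) : EReal) := fun h => by
    rw [rscale_apply_of_ne_top (h ▸ EReal.coe_ne_top _), h, EReal.coe_mul]
  have hkey : ‖q - p‖ ^ 2 ≤ (γ * b - γ * a) - (μ * b - μ * a) :=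
    hp.norm_sub_sq_le hq (convexEpi_rscale hf.2.2.2 hγ0.le) (convexEpi_rscale hf.2.2.2 hμ)
      (hval ha) (hval hb) (hval ha) (hval hb)
  have hdiv : ‖q - p‖ ^ 2 / (γ - μ) ≤ b - a := by
    rw [div_le_iff₀ (sub_pos.2 hγ)]
    linarith
  rw [ha, hb, ← EReal.coe_sub, EReal.coe_le_coe_iff]
  linarith
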